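/- If γ_t is an integer linear combination of γ_1,…,γ_n with small coefficients, i.e. there exist integers α_1,…,α_n with |α_i| ≤ N for all i such that α_1γ_1 + ⋯ + α_nγ_n = γ_t, then there exists a nonzero vector v ∈ L(K;(γ_1,…,γ_n,γ_t)) with ‖v‖² < (n² + n)N² + 2nN + 2. -/

import Mathlib

/-- Membership in the lattice `L(K; (δ_1, …, δ_m)) ⊆ ℤ^{m+1}`: the vectors
`(a_1, …, a_m, K(a_1 δ_1' + ⋯ + a_m δ_m'))` with `a_i ∈ ℤ`, where `δ_i' = ⌊K δ_i⌋ / K`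
(so the last coordinate is `∑ i, a_i ⌊K δ_i⌋`). -/
def inLattice (K : ℕ) {m : ℕ} (δ : Fin m → ℝ) (v : Fin (m + 1) → ℤ) : Prop :=
  ∃ a : Fin m → ℤ, (∀ i : Fin m, v i.castSucc = a i) ∧
    v (Fin.last m) = ∑ i, a i * ⌊(K : ℝ) * δ i⌋

/-!
The relation `∑ αᵢ γᵢ = γt` makes the lattice vector with coefficients `(α, -1)` short: its last
coordinate is `∑ αᵢ ⌊K γᵢ⌋ - ⌊∑ αᵢ K γᵢ⌋`, which measures only how far taking floors is from
commuting with the integer combination, and so is at most `∑ |αᵢ|` in absolute value whatever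
`K` is.
-/

lemma sum_sq_add_sq_sum_abs_le {ι R : Type*} [CommRing R] [LinearOrder R]
    [IsStrictOrderedRing R] {s : Finset ι} {a : ι → R} {B : R}
    (ha : ∀ i ∈ s, |a i| ≤ B) :
    ∑ i ∈ s, a i ^ 2 + (∑ i ∈ s, |a i|) ^ 2 ≤ ((s.card : R) ^ 2 + s.card) * B ^ 2 := by
  have sum_sq_le : ∑ i ∈ s, a i ^ 2 ≤ s.card * B ^ 2 := by
    rw [← nsmul_eq_mul]
    exact Finset.sum_le_card_nsmul s _ _ fun i hi => sq_le_sq' (abs_le.mp (ha i hi)).1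
      (abs_le.mp (ha i hi)).2
  have sum_abs_le : ∑ i ∈ s, |a i| ≤ s.card * B := by
    rw [← nsmul_eq_mul]
    exact Finset.sum_le_card_nsmul s _ _ ha
  calc ∑ i ∈ s, a i ^ 2 + (∑ i ∈ s, |a i|) ^ 2 ≤ s.card * B ^ 2 + (s.card * B) ^ 2 := by gcongr
    _ = ((s.card : R) ^ 2 + s.card) * B ^ 2 := by ring

section IntegerCombinations

variable {ι R : Type*} [Ring R] [LinearOrder R] [IsStrictOrderedRing R] [FloorRing R]

lemma abs_floor_le_of_abs_le {y : R} {m : ℤ} (hy : |y| ≤ m) : |⌊y⌋| ≤ m := by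
  obtain ⟨hlower, hupper⟩ := abs_le.mp hy
  refine abs_le.mpr ⟨Int.le_floor.mpr ?_, Int.floor_le_iff.mpr ?_⟩
  · exact_mod_cast hlower
  · exact hupper.trans_lt (lt_add_one _)

lemma abs_sum_mul_fract_le (s : Finset ι) (a x : ι → R) :
    |∑ i ∈ s, a i * Int.fract (x i)| ≤ ∑ i ∈ s, |a i| := by
  refine (Finset.abs_sum_le_sum_abs _ _).trans (Finset.sum_le_sum fun i _ => ?_)
  rw [abs_mul, Int.abs_fract]
  exact mul_le_of_le_one_right (abs_nonneg _) (Int.fract_lt_one _).le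

lemma floor_sum_intCast_mul (s : Finset ι) (α : ι → ℤ) (x : ι → R) :
    ⌊∑ i ∈ s, (α i : R) * x i⌋ =
      ∑ i ∈ s, α i * ⌊x i⌋ + ⌊∑ i ∈ s, (α i : R) * Int.fract (x i)⌋ := by
  rw [← Int.floor_intCast_add, Int.cast_sum, ← Finset.sum_add_distrib]
  simp only [Int.cast_mul, ← mul_add, Int.floor_add_fract]

lemma abs_sum_mul_floor_sub_floor_sum_le (s : Finset ι) (α : ι → ℤ) (x : ι → R) :
    |∑ i ∈ s, α i * ⌊x i⌋ - ⌊∑ i ∈ s, (α i : R) * x i⌋| ≤ ∑ i ∈ s, |α i| := by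
  rw [floor_sum_intCast_mul, sub_add_cancel_left, abs_neg]
  apply abs_floor_le_of_abs_le
  exact_mod_cast abs_sum_mul_fract_le s (fun i => (α i : R)) x

end IntegerCombinations

section LatticeVector

variable {m : ℕ}

/-- The vector of the lattice `L(K; δ)` with coefficients `a`, that is, the combination
`∑ i, a i • bᵢ` of the standard lattice basis `bᵢ = (eᵢ, ⌊K δᵢ⌋)`. -/
noncomputable def latticeVector (K : ℕ) (δ : Fin m → ℝ) (a : Fin m → ℤ) : Fin (m + 1) → ℤ :=
  Fin.snoc a (∑ i, a i * ⌊(K : ℝ) * δ i⌋)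

lemma inLattice_latticeVector (K : ℕ) (δ : Fin m → ℝ) (a : Fin m → ℤ) :
    inLattice K δ (latticeVector K δ a) :=
  ⟨a, fun i => Fin.snoc_castSucc (α := fun _ => ℤ) _ a i, Fin.snoc_last (α := fun _ => ℤ) _ a⟩

lemma latticeVector_ne_zero (K : ℕ) (δ : Fin m → ℝ) {a : Fin m → ℤ} (ha : a ≠ 0) :
    latticeVector K δ a ≠ 0 := by
  obtain ⟨i, hi⟩ := Function.ne_iff.mp ha
  refine Function.ne_iff.mpr ⟨i.castSucc, ?_⟩
  simpa [latticeVector] using hi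

lemma sum_sq_latticeVector (K : ℕ) (δ : Fin m → ℝ) (a : Fin m → ℤ) :
    ∑ i, latticeVector K δ a i ^ 2 = ∑ i, a i ^ 2 + (∑ i, a i * ⌊(K : ℝ) * δ i⌋) ^ 2 := by
  simp [latticeVector, Fin.sum_univ_castSucc]

end LatticeVector

theorem dependent_extra_zero_short_vector_general (K : ℕ) {n : ℕ} {γ : Fin n → ℝ} {γt : ℝ}
    {α : Fin n → ℤ} (hrel : ∑ i, (α i : ℝ) * γ i = γt) :
    ∃ v : Fin (n + 2) → ℤ, v ≠ 0 ∧ inLattice K (Fin.snoc γ γt) v ∧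
      ∑ i, v i ^ 2 ≤ ∑ i, α i ^ 2 + (∑ i, |α i|) ^ 2 + 1 := by
  let a : Fin (n + 1) → ℤ := Fin.snoc α (-1)
  have ha : a ≠ 0 := Function.ne_iff.mpr ⟨Fin.last n, by simp [a]⟩
  refine ⟨latticeVector K (Fin.snoc γ γt) a, latticeVector_ne_zero K _ ha,
    inLattice_latticeVector K _ a, ?_⟩
  have sum_sq_coeff : ∑ i, a i ^ 2 = ∑ i, α i ^ 2 + 1 := by
    simp [a, Fin.sum_univ_castSucc]
  have scaled_relation : (K : ℝ) * γt = ∑ i, (α i : ℝ) * (K * γ i) := by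
    simp only [← hrel, Finset.mul_sum, mul_left_comm]
  have last_coord : ∑ i, a i * ⌊(K : ℝ) * (Fin.snoc γ γt : Fin (n + 1) → ℝ) i⌋ =
      ∑ i, α i * ⌊(K : ℝ) * γ i⌋ - ⌊∑ i, (α i : ℝ) * (K * γ i)⌋ := by
    rw [← scaled_relation]
    simp [a, Fin.sum_univ_castSucc, sub_eq_add_neg]
  have last_coord_sq_le := pow_le_pow_left₀ (abs_nonneg _)
    (abs_sum_mul_floor_sub_floor_sum_le Finset.univ α fun i => (K : ℝ) * γ i) 2
  rw [sq_abs, ← last_coord] at last_coord_sq_le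
  rw [sum_sq_latticeVector, sum_sq_coeff]
  linarith

/-- If `γ_t = α_1 γ_1 + ⋯ + α_n γ_n` with integers `|α_i| ≤ N`, then the lattice
`L(K; (γ_1, …, γ_n, γ_t)) ⊆ ℤ^{n+2}` contains a nonzero vector `v` with
`‖v‖² < (n² + n)N² + 2nN + 2`. -/
theorem dependent_extra_zero_short_vector
    (K N n : ℕ) (hK : 0 < K) (hN : 0 < N) (γ : Fin n → ℝ) (γt : ℝ)
    (α : Fin n → ℤ)
    (hbd : ∀ i, |α i| ≤ (N : ℤ))
    (hrel : ∑ i, (α i : ℝ) * γ i = γt) :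
    ∃ v : Fin (n + 2) → ℤ, v ≠ 0 ∧ inLattice K (Fin.snoc γ γt) v ∧
      (∑ i, ((v i : ℝ)) ^ 2) <
        ((n : ℝ) ^ 2 + (n : ℝ)) * (N : ℝ) ^ 2 + 2 * (n : ℝ) * (N : ℝ) + 2 := by
  obtain ⟨v, hv_ne, hv_mem, hv_le⟩ := dependent_extra_zero_short_vector_general K hrel
  have hcoeff := sum_sq_add_sq_sum_abs_le (s := Finset.univ) fun i _ => hbd i
  rw [Finset.card_univ, Fintype.card_fin] at hcoeff
  have hv_sq : ∑ i, (v i : ℝ) ^ 2 ≤ ((n : ℝ) ^ 2 + n) * (N : ℝ) ^ 2 + 1 := by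
    exact_mod_cast hv_le.trans (add_le_add_left hcoeff 1)
  have : (0 : ℝ) ≤ 2 * n * N := by positivity
  exact ⟨v, hv_ne, hv_mem, by linarith⟩
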